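/- Let d ≥ 3 and define F_0 = ε, F_i = φ(F_{i−1})0 for 1 ≤ i ≤ d−1. Then for every 0 ≤ k ≤ d−1: (i) the word F_k·(d−1) is a suffix of φ^{d−1}(0); and (ii) the word φ^k(d−1)·F_k·(d−1) is a factor of the fixed point u_d. -/

import Mathlib

namespace RichRT

variable {A : Type*}

/-- The word `w` occurs in the sequence `u` at position `j`. -/
def OccursAt (w : List A) (u : ℕ → A) (j : ℕ) : Prop :=
  w = (List.range w.length).map fun t => u (j + t)

/-- `w` is a factor of the infinite sequence `u`. -/
def IsFactorS (w : List A) (u : ℕ → A) : Prop :=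
  ∃ j : ℕ, OccursAt w u j

/-- `u` is recurrent: every factor occurs infinitely often. -/
def Recurrent (u : ℕ → A) : Prop :=
  ∀ w : List A, IsFactorS w u → ∀ N : ℕ, ∃ j, N ≤ j ∧ OccursAt w u j

/-- The number of distinct palindromic factors of a finite word. -/
noncomputable def palCount (w : List A) : ℕ :=
  Set.ncard {p : List A | p <:+: w ∧ p.reverse = p}

/-- A finite word of length `n` is rich if it has exactly `n+1` palindromic factors. -/
def RichWord (w : List A) : Prop := palCount w = w.length + 1

/-- A sequence is rich if all its factors are rich. -/
def RichSeq (u : ℕ → A) : Prop := ∀ w : List A, IsFactorS w u → RichWord w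

/-- The prefix of length `k` of the periodic sequence `vvv⋯`. -/
def powPref (v : List A) (k : ℕ) : List A := ((List.replicate k v).flatten).take k

/-- The set of exponents `k/|v|` of fractional powers `v^(k/|v|)` occurring in `u`,
with `|v| ≥ n`. -/
def expSet (u : ℕ → A) (n : ℕ) : Set ℝ :=
  {x | ∃ (v : List A) (k : ℕ), v ≠ [] ∧ n ≤ v.length ∧
    IsFactorS (powPref v k) u ∧ x = (k : ℝ) / (v.length : ℝ)}

/-- The critical exponent of a sequence, with values in `EReal`. -/
noncomputable def critExp (u : ℕ → A) : EReal :=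
  sSup ((fun x : ℝ => (x : EReal)) '' expSet u 0)

/-- The asymptotic critical exponent of a sequence: `⊤` if the critical exponent is `⊤`,
otherwise the limit (= infimum, by monotonicity) over `n` of the suprema of exponents of
powers `v^e` with `|v| ≥ n`. -/
noncomputable def acritExp (u : ℕ → A) : EReal :=
  if critExp u = ⊤ then ⊤
  else ⨅ n : ℕ, sSup ((fun x : ℝ => (x : EReal)) '' expSet u n)

/-- The morphism `φ_d` on letters: `i ↦ 0(i+1)` for `i < d-1`, `d-1 ↦ 0(d-1)(d-1)`. -/
def phiL (d : ℕ) (i : ℕ) : List ℕ :=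
  if i < d - 1 then [0, i + 1] else [0, d - 1, d - 1]

/-- The morphism `φ_d` on words. -/
def phiW (d : ℕ) (w : List ℕ) : List ℕ := w.flatMap (phiL d)

/-- `u` is the fixed point of `φ_d`: it begins with `0` and `φ_d(u) = u`, i.e. the image
of every prefix of `u` is again a prefix of `u`. -/
def IsPhiFixed (d : ℕ) (u : ℕ → ℕ) : Prop :=
  u 0 = 0 ∧ ∀ m : ℕ, OccursAt (phiW d ((List.range m).map u)) u 0

/-- Left extensions of `w` in `u`. -/
def Lext (u : ℕ → ℕ) (w : List ℕ) : Set (List ℕ) :=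
  {x | ∃ i : ℕ, x = i :: w ∧ IsFactorS x u}

/-- Right extensions of `w` in `u`. -/
def Rext (u : ℕ → ℕ) (w : List ℕ) : Set (List ℕ) :=
  {x | ∃ i : ℕ, x = w ++ [i] ∧ IsFactorS x u}

/-- Both-sided extensions of `w` in `u`. -/
def Bext (u : ℕ → ℕ) (w : List ℕ) : Set (List ℕ) :=
  {x | ∃ i j : ℕ, x = i :: (w ++ [j]) ∧ IsFactorS x u}

/-- `w` is a bispecial factor of `u`. -/
def Bispecial (u : ℕ → ℕ) (w : List ℕ) : Prop :=
  IsFactorS w u ∧ 2 ≤ (Lext u w).ncard ∧ 2 ≤ (Rext u w).ncard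

/-- The bilateral order `b(w) = #Bext(w) − #Lext(w) − #Rext(w) + 1`. -/
noncomputable def bord (u : ℕ → ℕ) (w : List ℕ) : ℤ :=
  ((Bext u w).ncard : ℤ) - ((Lext u w).ncard : ℤ) - ((Rext u w).ncard : ℤ) + 1

/-- The palindromes `F_0 = ε`, `F_i = φ(F_{i-1})0`. -/
def Fword (d : ℕ) : ℕ → List ℕ
  | 0 => []
  | i + 1 => phiW d (Fword d i) ++ [0]

/-- Membership in the set `𝒯` of bispecial triplets. -/
def TripleMem (d : ℕ) (u : ℕ → ℕ) (t : ℕ × List ℕ × ℕ) : Prop :=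
  Bispecial u t.2.1 ∧ t.1 < d - 1 ∧ t.2.2 < d - 1 ∧
    IsFactorS (t.1 :: t.2.1) u ∧ IsFactorS (t.2.1 ++ [t.2.2]) u

/-- The map `f` on triplets. -/
def fmap (d : ℕ) (t : ℕ × List ℕ × ℕ) : ℕ × List ℕ × ℕ :=
  ((t.1 + 1) % (d - 1),
   (if t.1 = d - 2 then [d - 1] else []) ++ phiW d t.2.1 ++ [0] ++
     (if t.2.2 = d - 2 then [d - 1] else []),
   (t.2.2 + 1) % (d - 1))

/-- The initial triplets `T_k = (0, ε, k)` for `k ≤ d-2` and `T_{d-1} = (0, d-1, 0)`. -/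
def Tinit (d k : ℕ) : ℕ × List ℕ × ℕ :=
  if k = d - 1 then (0, [d - 1], 0) else (0, ([] : List ℕ), k)

/-- The Parikh vector of a word. -/
def parikh (d : ℕ) (w : List ℕ) : Fin d → ℕ := fun i => w.count (i : ℕ)

/-- The incidence matrix of `φ_d`. -/
def Mmat (d : ℕ) : Matrix (Fin d) (Fin d) ℕ := fun i j => (phiL d (j : ℕ)).count (i : ℕ)

/-- `r` is a return word to `w` in `u`. -/
def ReturnWord (u : ℕ → ℕ) (w r : List ℕ) : Prop :=
  ∃ j ℓ : ℕ, j < ℓ ∧ OccursAt w u j ∧ OccursAt w u ℓ ∧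
    (∀ m, j < m → m < ℓ → ¬ OccursAt w u m) ∧
    r = (List.range (ℓ - j)).map fun t => u (j + t)

/-- `R` is a complete return word to `w` in `u`. -/
def CompleteReturn (u : ℕ → ℕ) (w R : List ℕ) : Prop :=
  ∃ r : List ℕ, ReturnWord u w r ∧ R = r ++ w

theorem factor_of_infix {u : ℕ → ℕ} {w : List ℕ} {m : ℕ}
    (h : w <:+: (List.range m).map u) : IsFactorS w u := by
  obtain ⟨s, t, h⟩ := h
  refine ⟨s.length, ?_⟩
  unfold OccursAt
  apply List.ext_getElem
  · simp
  · intro i h1 h2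
    have hl := congrArg List.length h
    simp only [List.length_append, List.length_map, List.length_range] at hl
    have h3 : (s ++ w ++ t)[s.length + i]'(by simp; omega) = w[i] := by
      rw [List.getElem_append_left (by simp; omega), List.getElem_append_right (by omega)]
      simp
    rw [← h3]
    simp [h]

theorem infix_of_factor {u : ℕ → ℕ} {w : List ℕ}
    (h : IsFactorS w u) : ∃ m, w <:+: (List.range m).map u := by
  obtain ⟨j, h⟩ := h
  refine ⟨j + w.length, (List.range j).map u, [], ?_⟩
  unfold OccursAt at h
  rw [List.range_add, List.map_append, List.append_nil, List.map_map]
  congr 1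

theorem phiW_append (d : ℕ) (a b : List ℕ) : phiW d (a ++ b) = phiW d a ++ phiW d b := by
  simp [phiW]

theorem phiW_iter_append (d k : ℕ) (a b : List ℕ) :
    (phiW d)^[k] (a ++ b) = (phiW d)^[k] a ++ (phiW d)^[k] b := by
  induction k with
  | zero => rfl
  | succ k ih => simp only [Function.iterate_succ_apply', ih, phiW_append]

theorem factor_mono {u : ℕ → ℕ} {v w : List ℕ} (h : IsFactorS w u) (hv : v <:+: w) :
    IsFactorS v u := by
  obtain ⟨m, hm⟩ := infix_of_factor h
  exact factor_of_infix (hv.trans hm)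

theorem factor_phi {d : ℕ} {u : ℕ → ℕ} (hu : IsPhiFixed d u) {w : List ℕ}
    (h : IsFactorS w u) : IsFactorS (phiW d w) u := by
  obtain ⟨m, s, t, hm⟩ := infix_of_factor h
  have h2 : IsFactorS (phiW d ((List.range m).map u)) u := ⟨0, hu.2 m⟩
  refine factor_mono h2 ⟨phiW d s, phiW d t, ?_⟩
  rw [← hm, phiW_append, phiW_append]

theorem factor_phi_iter {d : ℕ} {u : ℕ → ℕ} (hu : IsPhiFixed d u) {w : List ℕ}
    (h : IsFactorS w u) (k : ℕ) : IsFactorS ((phiW d)^[k] w) u := by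
  induction k with
  | zero => exact h
  | succ k ih => rw [Function.iterate_succ_apply']; exact factor_phi hu ih

theorem phi_iter_zero (d k : ℕ) (hk : k ≤ d - 1) :
    (phiW d)^[k] [0] = Fword d k ++ [k] := by
  induction k with
  | zero => rfl
  | succ k ih =>
    rw [Function.iterate_succ_apply', ih (by omega), phiW_append, Fword]
    have : k < d - 1 := by omega
    simp [phiW, phiL, this]

theorem Fword_suffix_succ (d k : ℕ) : Fword d k <:+ Fword d (k + 1) := by
  induction k with
  | zero => exact List.nil_suffix
  | succ k ih =>
    obtain ⟨s, hs⟩ := ih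
    refine ⟨phiW d s, ?_⟩
    rw [Fword, Fword, ← hs, phiW_append, List.append_assoc]

theorem Fword_suffix (d : ℕ) {k n : ℕ} (h : k ≤ n) : Fword d k <:+ Fword d n := by
  induction n, h using Nat.le_induction with
  | base => exact List.suffix_refl _
  | succ n _ ih => exact ih.trans (Fword_suffix_succ d n)

theorem phi_iter_last (d k : ℕ) :
    Fword d k ++ [d - 1] <+: (phiW d)^[k] [d - 1] := by
  induction k with
  | zero => exact List.prefix_refl _
  | succ k ih =>
    obtain ⟨t, ht⟩ := ih
    refine ⟨[d - 1] ++ phiW d t, ?_⟩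
    rw [Function.iterate_succ_apply', ← ht, phiW_append, phiW_append, Fword]
    simp [phiW, phiL]

/-- Let `d ≥ 3` and `F_0 = ε`, `F_i = φ(F_{i−1})0`. Then for `0 ≤ k ≤ d−1`:
(i) `F_k·(d−1)` is a suffix of `φ^{d−1}(0)`; (ii) `φ^k(d−1)·F_k·(d−1)` is a factor of the
fixed point `u_d`. -/
theorem statement15 (d : ℕ) (hd : 3 ≤ d) (u : ℕ → ℕ) (hu : IsPhiFixed d u)
    (k : ℕ) (hk : k ≤ d - 1) :
    (Fword d k ++ [d - 1]) <:+ (phiW d)^[d - 1] [0] ∧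
    IsFactorS ((phiW d)^[k] [d - 1] ++ (Fword d k ++ [d - 1])) u := by
  have h0 : IsFactorS [0] u := ⟨0, by simp [OccursAt, hu.1]⟩
  have h1 : IsFactorS [d - 1] u := by
    have := factor_phi_iter hu h0 (d - 1)
    rw [phi_iter_zero d _ le_rfl] at this
    exact factor_mono this (List.suffix_append _ _).isInfix
  have h2 : IsFactorS ([d - 1] ++ [d - 1]) u :=
    factor_mono (factor_phi hu h1) ⟨[0], [], by simp [phiW, phiL]⟩
  constructor
  · rw [phi_iter_zero d _ le_rfl]
    obtain ⟨s, hs⟩ := Fword_suffix d hk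
    exact ⟨s, by rw [← hs, List.append_assoc]⟩
  · have h3 := factor_phi_iter hu h2 k
    rw [phiW_iter_append] at h3
    obtain ⟨t, ht⟩ := phi_iter_last d k
    refine factor_mono h3 ⟨[], t, ?_⟩
    rw [List.nil_append, List.append_assoc, ht]
end RichRT
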